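/- (Buchdahl-type inequality, Andréasson) Let m : [0,R] → ℝ with m(r) = 4π ∫₀^r η² ρ(η) dη for a static spherically symmetric solution with ρ, p, p_T ≥ 0 satisfying p + 2 p_T ≤ Ω ρ for some Ω > 0 and the static Einstein equations in Schwarzschild coordinates. Then for all r, 2m(r)/r ≤ ((1+2Ω)² - 1)/(1+2Ω)². -/

import Mathlib

/-!
Put `u = 1 - 2m/r` and `y = 8πr²p`, `E = 8πr²ρ`, `T = 8πr²p_T`. The field equations become the
system `r u' = 1 - u - E`, `r y' = 2T - (1 - u + y)(E + y) / (2u)`, and the quantity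
`c = (1 + y + (1 + 2Ω)u) / √u` tends to `2 + 2Ω` at the center `u = 1`, `y = 0`. Along the system
`ρ` and `p_T` enter `c'` only through `ΩE - y - 2T ≥ 0`, and what is left is negative as soon as
`c > 2 + 2Ω`. So `c ≤ 2 + 2Ω` everywhere; since `y ≥ 0`, this is a quadratic inequality for `√u`,
which gives `1 ≤ (1 + 2Ω)√u`.
-/

open Set Filter Topology Real

lemma le_of_tendsto_nhdsGT_of_deriv_neg {f f' : ℝ → ℝ} {a b L : ℝ}
    (hf : ∀ x ∈ Ioc a b, HasDerivWithinAt f (f' x) (Icc a b) x)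
    (hlim : Tendsto f (𝓝[>] a) (𝓝 L)) (hneg : ∀ x ∈ Ioc a b, L < f x → f' x < 0) :
    ∀ x ∈ Ioc a b, f x ≤ L := by
  intro x hx
  refine le_of_forall_gt_imp_ge_of_dense fun L' hL' ↦ ?_
  have hnear : ∀ᶠ t in 𝓝[>] a, t ∈ Ioc a x := Ioc_mem_nhdsGT hx.1
  obtain ⟨a', ha', hfa'⟩ := (hnear.and (hlim.eventually_lt_const hL')).exists
  have hIoc : Icc a' x ⊆ Ioc a b := Icc_subset_Ioc ha'.1 hx.2
  have hderiv : ∀ t ∈ Icc a' x, HasDerivWithinAt f (f' t) (Icc a' x) t := fun t ht ↦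
    (hf t (hIoc ht)).mono (hIoc.trans Ioc_subset_Icc_self)
  exact image_le_of_deriv_right_lt_deriv_boundary
    (fun t ht ↦ (hderiv t ht).continuousWithinAt)
    (fun t ht ↦ (hderiv t (Ico_subset_Icc_self ht)).mono_of_mem_nhdsWithin
      (Icc_mem_nhdsGE_of_mem ht))
    hfa'.le (fun _ ↦ hasDerivAt_const _ L')
    (fun t ht hft ↦ hneg t (hIoc (Ico_subset_Icc_self ht)) (hft ▸ hL')) ⟨ha'.2, le_rfl⟩

section Lyapunov

variable {Ω : ℝ}

/-- The quantity `(1 + y + (1 + 2Ω)u) / √u` controlling the solution, where `y` stands for `8πr²p`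
and `u` for `1 - 2m/r`. -/
noncomputable def buchdahlFunction (Ω y u : ℝ) : ℝ :=
  (1 + y + (1 + 2 * Ω) * u) / √u

lemma inv_sq_le_of_buchdahlFunction_le {y u : ℝ} (hΩ : 0 ≤ Ω) (hu : 0 < u) (hu1 : u ≤ 1)
    (hy : 0 ≤ y) (h : buchdahlFunction Ω y u ≤ 2 + 2 * Ω) : 1 / (1 + 2 * Ω) ^ 2 ≤ u := by
  have hs : 0 < √u := sqrt_pos.mpr hu
  have hsq : √u ^ 2 = u := sq_sqrt hu.le
  have hs1 : √u ≤ 1 := sqrt_le_one.mpr hu1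
  have hquad : (1 - √u) * (1 - (1 + 2 * Ω) * √u) ≤ 0 := by
    rw [buchdahlFunction, div_le_iff₀ hs] at h
    linear_combination h + hy + (1 + 2 * Ω) * hsq
  have hroot : 1 ≤ (1 + 2 * Ω) * √u := by
    rcases hs1.eq_or_lt with hs1 | hs1
    · rw [hs1]; linarith
    · linarith [nonpos_of_mul_nonpos_right hquad (sub_pos.mpr hs1)]
  rw [div_le_iff₀' (by positivity), ← hsq, ← mul_pow]
  exact one_le_pow₀ hroot

lemma two_mul_lt_of_lt_buchdahlFunction {y u : ℝ} (hΩ : 0 ≤ Ω) (hu : 0 < u) (hu1 : u ≤ 1)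
    (h : 2 + 2 * Ω < buchdahlFunction Ω y u) :
    2 * (1 + Ω) * u * (1 - u) < (1 - u + y) * (1 - u + y + 2 * u) := by
  obtain ⟨s, hs, rfl⟩ : ∃ s, 0 < s ∧ u = s ^ 2 := ⟨√u, sqrt_pos.mpr hu, (sq_sqrt hu.le).symm⟩
  have hs1 : 0 ≤ 1 - s := sub_nonneg.mpr ((sq_le_one_iff₀ hs.le).mp hu1)
  rw [buchdahlFunction, sqrt_sq hs.le, lt_div_iff₀ hs] at h
  have hA : 2 * (1 + Ω) * s * (1 - s) < 1 - s ^ 2 + y := by linarith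
  calc 2 * (1 + Ω) * s ^ 2 * (1 - s ^ 2)
      ≤ 2 * (1 + Ω) * s ^ 2 * (1 - s ^ 2) + 2 * (1 + Ω) * (1 + 2 * Ω) * s ^ 2 * (1 - s) ^ 2 :=
        le_add_of_nonneg_right (by positivity)
    _ = 2 * (1 + Ω) * s * (1 - s) * (2 * (1 + Ω) * s * (1 - s) + 2 * s ^ 2) := by ring
    _ < (1 - s ^ 2 + y) * (1 - s ^ 2 + y + 2 * s ^ 2) := by gcongr

lemma hasDerivWithinAt_buchdahlFunction {y u : ℝ → ℝ} {E T r : ℝ} {s : Set ℝ} (hu : 0 < u r)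
    (hu' : HasDerivWithinAt u ((1 - u r - E) / r) s r)
    (hy' : HasDerivWithinAt y ((2 * T - (1 - u r + y r) * (E + y r) / (2 * u r)) / r) s r) :
    HasDerivWithinAt (fun t ↦ buchdahlFunction Ω (y t) (u t))
      ((2 * (1 + Ω) * u r * (1 - u r) - (1 - u r + y r) * (1 - u r + y r + 2 * u r)
        - 2 * u r * (Ω * E - (y r + 2 * T))) / (2 * r * √(u r) ^ 3)) s r := by
  obtain ⟨w, hw, hsq⟩ : ∃ w, 0 < w ∧ u r = w ^ 2 :=
    ⟨√(u r), sqrt_pos.mpr hu, (sq_sqrt hu.le).symm⟩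
  refine (((hy'.const_add 1).add (hu'.const_mul (1 + 2 * Ω))).div
    (hu'.sqrt hu.ne') (sqrt_pos.mpr hu).ne').congr_deriv ?_
  simp only [Pi.add_apply, hsq, sqrt_sq hw.le]
  field_simp
  ring

lemma tendsto_buchdahlFunction {ι : Type*} {l : Filter ι} {y u : ι → ℝ}
    (hu : Tendsto u l (𝓝 1)) (hy : Tendsto y l (𝓝 0)) :
    Tendsto (fun t ↦ buchdahlFunction Ω (y t) (u t)) l (𝓝 (2 + 2 * Ω)) := by
  have h := ((hy.const_add 1).add (hu.const_mul (1 + 2 * Ω))).div hu.sqrt (by simp)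
  have hlim : (1 + 0 + (1 + 2 * Ω) * 1) / √1 = 2 + 2 * Ω := by
    rw [sqrt_one]; ring
  exact hlim ▸ h

theorem buchdahlFunction_le {R : ℝ} {u y E T : ℝ → ℝ} (hΩ : 0 ≤ Ω)
    (hu : ∀ r ∈ Ioc 0 R, 0 < u r) (hu1 : ∀ r ∈ Ioc 0 R, u r ≤ 1)
    (hΩcond : ∀ r ∈ Ioc 0 R, y r + 2 * T r ≤ Ω * E r)
    (hu' : ∀ r ∈ Ioc 0 R, HasDerivWithinAt u ((1 - u r - E r) / r) (Icc 0 R) r)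
    (hy' : ∀ r ∈ Ioc 0 R, HasDerivWithinAt y
      ((2 * T r - (1 - u r + y r) * (E r + y r) / (2 * u r)) / r) (Icc 0 R) r)
    (hu0 : Tendsto u (𝓝[>] 0) (𝓝 1)) (hy0 : Tendsto y (𝓝[>] 0) (𝓝 0)) :
    ∀ r ∈ Ioc 0 R, buchdahlFunction Ω (y r) (u r) ≤ 2 + 2 * Ω := by
  refine le_of_tendsto_nhdsGT_of_deriv_neg
    (fun r hr ↦ hasDerivWithinAt_buchdahlFunction (hu r hr) (hu' r hr) (hy' r hr))
    (tendsto_buchdahlFunction hu0 hy0) fun r hr hlt ↦ ?_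
  have hmain := two_mul_lt_of_lt_buchdahlFunction hΩ (hu r hr) (hu1 r hr) hlt
  have hmatter : 0 ≤ 2 * u r * (Ω * E r - (y r + 2 * T r)) :=
    mul_nonneg (by linarith [hu r hr]) (sub_nonneg.mpr (hΩcond r hr))
  have hs : 0 < √(u r) := sqrt_pos.mpr (hu r hr)
  exact div_neg_of_neg_of_pos (by linarith) (by have := hr.1; positivity)

end Lyapunov

section FieldEquations

variable {R r : ℝ} {ρ p m : ℝ → ℝ}

/-- The metric coefficient `e^{-2λ} = 1 - 2m/r`; its value at `r = 0` is `1` by the convention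
`x / 0 = 0`. -/
noncomputable def expNegTwoLambda (m : ℝ → ℝ) (r : ℝ) : ℝ :=
  1 - 2 * m r / r

/-- The dimensionless form `8πr²f` of a density or pressure `f`. -/
noncomputable def dimensionless (f : ℝ → ℝ) (r : ℝ) : ℝ :=
  8 * π * r ^ 2 * f r

lemma expNegTwoLambda_pos (hr : 0 < r) (hm : 2 * m r < r) : 0 < expNegTwoLambda m r :=
  sub_pos.mpr ((div_lt_one hr).mpr hm)

lemma expNegTwoLambda_le_one (hr : 0 ≤ r) (hm : 0 ≤ m r) : expNegTwoLambda m r ≤ 1 :=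
  sub_le_self 1 (by positivity)

lemma dimensionless_nonneg (hp : 0 ≤ p r) : 0 ≤ dimensionless p r := by
  unfold dimensionless
  positivity

lemma dimensionless_add_two_mul_le {pT : ℝ → ℝ} {Ω : ℝ} (h : p r + 2 * pT r ≤ Ω * ρ r) :
    dimensionless p r + 2 * dimensionless pT r ≤ Ω * dimensionless ρ r := by
  unfold dimensionless
  linear_combination 8 * π * r ^ 2 * h

lemma hasDerivWithinAt_expNegTwoLambda {s : Set ℝ} (hr : r ≠ 0)
    (hm : HasDerivWithinAt m (4 * π * (r ^ 2 * ρ r)) s r) :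
    HasDerivWithinAt (expNegTwoLambda m)
      ((1 - expNegTwoLambda m r - dimensionless ρ r) / r) s r := by
  refine (((hm.const_mul 2).div (hasDerivWithinAt_id r s) hr).const_sub 1).congr_deriv ?_
  simp only [expNegTwoLambda, dimensionless, id]
  field_simp
  ring

lemma hasDerivWithinAt_dimensionless_pressure {pT : ℝ → ℝ} {s : Set ℝ} (hr : r ≠ 0)
    (hu : expNegTwoLambda m r ≠ 0)
    (hp : HasDerivWithinAt p
      (-((m r / r ^ 2 + 4 * π * r * p r) / (1 - 2 * m r / r)) * (ρ r + p r)
        + 2 * (pT r - p r) / r) s r) :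
    HasDerivWithinAt (dimensionless p)
      ((2 * dimensionless pT r
        - (1 - expNegTwoLambda m r + dimensionless p r) * (dimensionless ρ r + dimensionless p r)
          / (2 * expNegTwoLambda m r)) / r) s r := by
  refine ((((hasDerivWithinAt_id r s).pow 2).const_mul (8 * π)).mul hp).congr_deriv ?_
  have hm : m r = r * (1 - expNegTwoLambda m r) / 2 := by
    unfold expNegTwoLambda; field_simp; ring
  have hdenom : 1 - 2 * m r / r = expNegTwoLambda m r := rfl
  rw [hdenom, hm]
  simp only [dimensionless, id, Pi.pow_apply]
  field_simp
  ring

lemma tendsto_expNegTwoLambda_nhdsGT_zero (hR : 0 < R) (hm0 : m 0 = 0)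
    (hm : HasDerivWithinAt m 0 (Icc 0 R) 0) : Tendsto (expNegTwoLambda m) (𝓝[>] 0) (𝓝 1) := by
  have hslope : Tendsto (slope m 0) (𝓝[>] 0) (𝓝 0) := by
    rw [← nhdsWithin_Ioc_eq_nhdsGT hR]
    exact (hasDerivWithinAt_iff_tendsto_slope' (by simp)).mp (hm.mono Ioc_subset_Icc_self)
  convert (hslope.const_mul 2).const_sub 1 using 2 with r
  · simp [expNegTwoLambda, slope_def_field, hm0, mul_div_assoc]
  · simp

lemma tendsto_dimensionless_nhdsGT_zero {Ω : ℝ} (hR : 0 < R) (hρ : ContinuousWithinAt ρ (Icc 0 R) 0)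
    (hp : ∀ r ∈ Ioc 0 R, 0 ≤ p r) (hpρ : ∀ r ∈ Ioc 0 R, p r ≤ Ω * ρ r) :
    Tendsto (dimensionless p) (𝓝[>] 0) (𝓝 0) := by
  rw [← nhdsWithin_Ioc_eq_nhdsGT hR]
  have hρ0 : Tendsto (dimensionless fun r ↦ Ω * ρ r) (𝓝[Ioc 0 R] 0) (𝓝 0) := by
    have hcont : ContinuousWithinAt (dimensionless fun r ↦ Ω * ρ r) (Ioc 0 R) 0 := by
      have := hρ.mono Ioc_subset_Icc_self
      unfold dimensionless
      fun_prop
    simpa [dimensionless] using hcont.tendsto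
  refine squeeze_zero' ?_ ?_ hρ0 <;>
    filter_upwards [self_mem_nhdsWithin] with r hr
  · exact dimensionless_nonneg (hp r hr)
  · exact mul_le_mul_of_nonneg_left (hpρ r hr) (by positivity)

lemma hasDerivWithinAt_mass (hρ : ContinuousOn ρ (Icc 0 R))
    (hm : ∀ r ∈ Icc 0 R, m r = 4 * π * ∫ η in (0)..r, η ^ 2 * ρ η) (hr : r ∈ Icc 0 R) :
    HasDerivWithinAt m (4 * π * (r ^ 2 * ρ r)) (Icc 0 R) r := by
  have hcont : ContinuousOn (fun η ↦ η ^ 2 * ρ η) (Icc 0 R) := by fun_prop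
  have : Fact (r ∈ Icc 0 R) := ⟨hr⟩
  have hint : HasDerivWithinAt (fun r ↦ ∫ η in (0)..r, η ^ 2 * ρ η) (r ^ 2 * ρ r) (Icc 0 R) r :=
    intervalIntegral.integral_hasDerivWithinAt_right
      ((hcont.mono (Icc_subset_Icc_right hr.2)).intervalIntegrable_of_Icc hr.1)
      (hcont.stronglyMeasurableAtFilter_nhdsWithin measurableSet_Icc r) (hcont r hr)
  exact (hint.const_mul (4 * π)).congr hm (hm r hr)

lemma mass_nonneg (hr : 0 ≤ r) (hρ : ∀ η ∈ Icc 0 r, 0 ≤ ρ η)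
    (hm : m r = 4 * π * ∫ η in (0)..r, η ^ 2 * ρ η) : 0 ≤ m r := by
  have hint : 0 ≤ ∫ η in (0)..r, η ^ 2 * ρ η :=
    intervalIntegral.integral_nonneg hr fun η hη ↦ mul_nonneg (sq_nonneg η) (hρ η hη)
  rw [hm]
  positivity

end FieldEquations

/-- Andréasson's Buchdahl-type inequality: for a static spherically-symmetric
solution in Schwarzschild coordinates with nonnegative energy density `ρ`,
radial pressure `p` and tangential pressure `p_T` satisfying
`p + 2p_T ≤ Ω ρ`, the quasi-local mass `m(r) = 4π ∫₀^r η² ρ dη` satisfies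
`2m(r)/r ≤ ((1+2Ω)² - 1)/(1+2Ω)²`. -/
theorem buchdahl_type_inequality
    (R Ω : ℝ) (hR : 0 < R) (hΩ : 0 < Ω)
    (ρ prad pT m μ : ℝ → ℝ)
    (hρnn : ∀ r ∈ Set.Icc 0 R, 0 ≤ ρ r)
    (hpnn : ∀ r ∈ Set.Icc 0 R, 0 ≤ prad r)
    (hpTnn : ∀ r ∈ Set.Icc 0 R, 0 ≤ pT r)
    (hΩcond : ∀ r ∈ Set.Icc 0 R, prad r + 2 * pT r ≤ Ω * ρ r)
    (hρcont : ContinuousOn ρ (Set.Icc 0 R))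
    (hm : ∀ r ∈ Set.Icc 0 R, m r = 4 * Real.pi * ∫ η in (0)..r, η ^ 2 * ρ η)
    (hhorizon : ∀ r ∈ Set.Ioc 0 R, 2 * m r < r)
    (hμr : ∀ r ∈ Set.Ioc 0 R,
      HasDerivAt μ ((m r / r ^ 2 + 4 * Real.pi * r * prad r) / (1 - 2 * m r / r)) r)
    (hTOV : ∀ r ∈ Set.Ioc 0 R,
      HasDerivAt prad
        (-((m r / r ^ 2 + 4 * Real.pi * r * prad r) / (1 - 2 * m r / r))
            * (ρ r + prad r)
          + 2 * (pT r - prad r) / r) r) :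
    ∀ r ∈ Set.Ioc 0 R,
      2 * m r / r ≤ ((1 + 2 * Ω) ^ 2 - 1) / (1 + 2 * Ω) ^ 2 := by
  have hIcc : Ioc 0 R ⊆ Icc 0 R := Ioc_subset_Icc_self
  have h0 : 0 ∈ Icc 0 R := left_mem_Icc.mpr hR.le
  have hm' (r) (hr : r ∈ Icc 0 R) := hasDerivWithinAt_mass hρcont hm hr
  have hu (r) (hr : r ∈ Ioc 0 R) : 0 < expNegTwoLambda m r :=
    expNegTwoLambda_pos hr.1 (hhorizon r hr)
  have hu1 (r) (hr : r ∈ Ioc 0 R) : expNegTwoLambda m r ≤ 1 :=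
    expNegTwoLambda_le_one hr.1.le (mass_nonneg hr.1.le
      (fun η hη ↦ hρnn η (Icc_subset_Icc_right hr.2 hη)) (hm r (hIcc hr)))
  have hu0 : Tendsto (expNegTwoLambda m) (𝓝[>] 0) (𝓝 1) :=
    tendsto_expNegTwoLambda_nhdsGT_zero hR (by simp [hm 0 h0]) (by simpa using hm' 0 h0)
  have hy0 : Tendsto (dimensionless prad) (𝓝[>] 0) (𝓝 0) :=
    tendsto_dimensionless_nhdsGT_zero hR (hρcont 0 h0) (fun r hr ↦ hpnn r (hIcc hr))
      fun r hr ↦ by linarith [hΩcond r (hIcc hr), hpTnn r (hIcc hr)]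
  intro r hr
  have hle := buchdahlFunction_le hΩ.le hu hu1
    (fun r hr ↦ dimensionless_add_two_mul_le (hΩcond r (hIcc hr)))
    (fun r hr ↦ hasDerivWithinAt_expNegTwoLambda hr.1.ne' (hm' r (hIcc hr)))
    (fun r hr ↦ hasDerivWithinAt_dimensionless_pressure hr.1.ne' (hu r hr).ne'
      (hTOV r hr).hasDerivWithinAt) hu0 hy0 r hr
  rw [sub_div, div_self (by positivity)]
  exact le_sub_comm.mp (inv_sq_le_of_buchdahlFunction_le hΩ.le (hu r hr) (hu1 r hr)
    (dimensionless_nonneg (hpnn r (hIcc hr))) hle)
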